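/- Let w : ℕ → ℝ be strictly positive. Define the difference operator D on functions φ : ℕ → ℝ by (Dφ)(x) = √(w(x)/w(x+1))·φ(x+1) − √(w(x−1)/w(x))·φ(x−1) for x ≥ 1 and (Dφ)(0) = √(w(0)/w(1))·φ(1), and define the operator ε by (εφ)(2m) = −Σ_{k=m}^{∞} √(w(2m)/w(2k+1)) · (w(2m+1)w(2m+3)⋯w(2k+1))/(w(2m)w(2m+2)⋯w(2k)) · φ(2k+1) and (εφ)(2m+1) = Σ_{k=0}^{m} √(w(2k)/w(2m+1)) · (w(2k+1)w(2k+3)⋯w(2m+1))/(w(2k)w(2k+2)⋯w(2m)) · φ(2k). Then for every finitely supported φ : ℕ → ℝ one has D(εφ) = φ and ε(Dφ) = φ; that is, D and ε are mutually inverse on finitely supported functions. -/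

import Mathlib

open Finset

/-- The difference operator `D`: `(Dφ)(x) = √(w x / w (x+1))·φ(x+1) − √(w (x−1) / w x)·φ(x−1)`
(the second term absent at `x = 0`). -/
noncomputable def Dop (w : ℕ → ℝ) (φ : ℕ → ℝ) : ℕ → ℝ := fun x =>
  Real.sqrt (w x / w (x + 1)) * φ (x + 1) -
    (if x = 0 then 0 else Real.sqrt (w (x - 1) / w x) * φ (x - 1))

/-- The operator `ε`, defined by the parity-split sums
`(εφ)(2m) = −Σ_{k≥m} √(w(2m)/w(2k+1)) · (w(2m+1)w(2m+3)⋯w(2k+1))/(w(2m)w(2m+2)⋯w(2k)) · φ(2k+1)`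
and
`(εφ)(2m+1) = Σ_{k=0}^{m} √(w(2k)/w(2m+1)) · (w(2k+1)w(2k+3)⋯w(2m+1))/(w(2k)w(2k+2)⋯w(2m)) · φ(2k)`. -/
noncomputable def epsOp (w : ℕ → ℝ) (φ : ℕ → ℝ) : ℕ → ℝ := fun n =>
  if n % 2 = 0 then
    -(∑' k : ℕ, if n / 2 ≤ k then
        Real.sqrt (w n / w (2 * k + 1)) *
          ((∏ j ∈ Finset.range (k - n / 2 + 1), w (2 * (n / 2 + j) + 1)) /
           (∏ j ∈ Finset.range (k - n / 2 + 1), w (2 * (n / 2 + j)))) * φ (2 * k + 1)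
      else 0)
  else
    ∑ k ∈ Finset.range (n / 2 + 1),
      Real.sqrt (w (2 * k) / w n) *
        ((∏ j ∈ Finset.range (n / 2 - k + 1), w (2 * (k + j) + 1)) /
         (∏ j ∈ Finset.range (n / 2 - k + 1), w (2 * (k + j)))) * φ (2 * k)

/-!
Put `Q m = ∏_{j < m} w (2j+1) / w (2j)`, `a m = Q m / √(w (2m))` and
`b m = Q (m+1) / √(w (2m+1))`. Then
`(Dφ)(2m) = a m (φ(2m+1) / b m - φ(2m-1) / b (m-1))` and
`(Dφ)(2m+1) = (a (m+1) φ(2m+2) - a m φ(2m)) / b m`, while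
`(εφ)(2m) = -(1 / a m) ∑_{k ≥ m} b k φ(2k+1)` and
`(εφ)(2m+1) = b m ∑_{k ≤ m} φ(2k) / a k`. So, up to rescaling, `D` is a difference operator
exchanging the two parities, `ε` is the matching summation operator, and both compositions
telescope.
-/

lemma tsum_succ_sub_self {G : Type*} [AddCommGroup G] [TopologicalSpace G] [IsTopologicalAddGroup G]
    [T2Space G] {f : ℕ → G} (hf : Summable f) : ∑' n, (f (n + 1) - f n) = -f 0 := by
  rw [((summable_nat_add_iff 1).2 hf).tsum_sub hf, hf.tsum_eq_zero_add]
  abel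

lemma tsum_ite_le_eq_tsum_add {M : Type*} [AddCommMonoid M] [TopologicalSpace M] (f : ℕ → M)
    (m : ℕ) : ∑' k, (if m ≤ k then f k else 0) = ∑' k, f (m + k) := by
  have support_subset : Function.support (fun k ↦ if m ≤ k then f k else 0) ⊆
      Set.range (m + ·) := fun k hk ↦
    ⟨k - m, Nat.add_sub_cancel' (of_not_not fun h ↦ hk (if_neg h))⟩
  simpa using ((add_right_injective m).tsum_eq support_subset).symm

/-- The product `Q m = ∏_{j < m} w (2j+1) / w (2j)`; the products of weights in the kernel of `ε`
are its quotients `Q (m+1) / Q k`. -/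
noncomputable def ratioProd (w : ℕ → ℝ) (m : ℕ) : ℝ :=
  ∏ j ∈ range m, w (2 * j + 1) / w (2 * j)

/-- The scaling factor `a m` attached to the argument `2m`: the values `a m * φ (2m)` are the ones
whose differences `D` takes. -/
noncomputable def evenGauge (w : ℕ → ℝ) (m : ℕ) : ℝ :=
  ratioProd w m / √(w (2 * m))

/-- The scaling factor `b m` attached to the argument `2m+1`: the values `φ (2m+1) / b m` are the
ones whose differences `D` takes. -/
noncomputable def oddGauge (w : ℕ → ℝ) (m : ℕ) : ℝ :=
  ratioProd w (m + 1) / √(w (2 * m + 1))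

lemma ratioProd_succ (w : ℕ → ℝ) (m : ℕ) :
    ratioProd w (m + 1) = ratioProd w m * (w (2 * m + 1) / w (2 * m)) :=
  prod_range_succ _ _

section PositiveWeight

variable {w : ℕ → ℝ} (hw : ∀ x, 0 < w x)
include hw

lemma ratioProd_pos (m : ℕ) : 0 < ratioProd w m :=
  prod_pos fun _ _ ↦ div_pos (hw _) (hw _)

lemma evenGauge_pos (m : ℕ) : 0 < evenGauge w m :=
  div_pos (ratioProd_pos hw m) (Real.sqrt_pos.2 (hw _))

lemma oddGauge_pos (m : ℕ) : 0 < oddGauge w m :=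
  div_pos (ratioProd_pos hw (m + 1)) (Real.sqrt_pos.2 (hw _))

lemma prod_div_prod_eq_ratioProd_div {k m : ℕ} (hkm : k ≤ m) :
    (∏ j ∈ range (m - k + 1), w (2 * (k + j) + 1)) / (∏ j ∈ range (m - k + 1), w (2 * (k + j))) =
      ratioProd w (m + 1) / ratioProd w k := by
  rw [← prod_div_distrib, eq_div_iff (ratioProd_pos hw k).ne', mul_comm,
    show m + 1 = k + (m - k + 1) by lia]
  exact (prod_range_add (fun j ↦ w (2 * j + 1) / w (2 * j)) k (m - k + 1)).symm

lemma sqrt_mul_prod_div_prod_eq_gauge_div {k m : ℕ} (hkm : k ≤ m) :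
    √(w (2 * k) / w (2 * m + 1)) *
        ((∏ j ∈ range (m - k + 1), w (2 * (k + j) + 1)) /
          (∏ j ∈ range (m - k + 1), w (2 * (k + j)))) =
      oddGauge w m / evenGauge w k := by
  rw [prod_div_prod_eq_ratioProd_div hw hkm, Real.sqrt_div (hw _).le, oddGauge, evenGauge,
    div_div_div_eq]
  ring

lemma sqrt_div_eq_evenGauge_div_oddGauge (m : ℕ) :
    √(w (2 * m) / w (2 * m + 1)) = evenGauge w m / oddGauge w m := by
  have := ratioProd_pos hw m
  have := hw (2 * m)
  have := hw (2 * m + 1)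
  rw [Real.sqrt_div (hw _).le, evenGauge, oddGauge, ratioProd_succ]
  field_simp
  rw [Real.sq_sqrt (hw _).le, Real.sq_sqrt (hw _).le, mul_comm]

lemma sqrt_div_eq_evenGauge_succ_div_oddGauge (m : ℕ) :
    √(w (2 * m + 1) / w (2 * m + 2)) = evenGauge w (m + 1) / oddGauge w m := by
  have := ratioProd_pos hw (m + 1)
  rw [Real.sqrt_div (hw _).le, evenGauge, oddGauge, mul_add_one]
  field_simp

lemma Dop_zero (φ : ℕ → ℝ) : Dop w φ 0 = evenGauge w 0 * (φ 1 / oddGauge w 0) := by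
  have sqrt_ratio := sqrt_div_eq_evenGauge_div_oddGauge hw 0
  simp only [mul_zero, zero_add] at sqrt_ratio
  simp only [Dop, zero_add, if_true, sub_zero, sqrt_ratio]
  ring

lemma Dop_even_succ (φ : ℕ → ℝ) (m : ℕ) :
    Dop w φ (2 * (m + 1)) = evenGauge w (m + 1) *
      (φ (2 * (m + 1) + 1) / oddGauge w (m + 1) - φ (2 * m + 1) / oddGauge w m) := by
  have sqrt_pred : √(w (2 * (m + 1) - 1) / w (2 * (m + 1))) = evenGauge w (m + 1) / oddGauge w m :=
    sqrt_div_eq_evenGauge_succ_div_oddGauge hw m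
  rw [Dop, if_neg (by lia), sqrt_div_eq_evenGauge_div_oddGauge hw, sqrt_pred,
    show 2 * (m + 1) - 1 = 2 * m + 1 by lia]
  ring

lemma Dop_odd (φ : ℕ → ℝ) (m : ℕ) :
    Dop w φ (2 * m + 1) =
      (evenGauge w (m + 1) * φ (2 * (m + 1)) - evenGauge w m * φ (2 * m)) / oddGauge w m := by
  rw [Dop, if_neg (by lia), Nat.add_sub_cancel, sqrt_div_eq_evenGauge_div_oddGauge hw,
    sqrt_div_eq_evenGauge_succ_div_oddGauge hw, mul_add_one]
  ring

lemma epsOp_even (φ : ℕ → ℝ) (m : ℕ) :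
    epsOp w φ (2 * m) =
      -(∑' k, oddGauge w (m + k) * φ (2 * (m + k) + 1)) / evenGauge w m := by
  rw [epsOp, if_pos (by lia), Nat.mul_div_cancel_left m two_pos, tsum_ite_le_eq_tsum_add,
    neg_div, ← tsum_div_const]
  congr! 3 with k
  rw [sqrt_mul_prod_div_prod_eq_gauge_div hw (Nat.le_add_right m k)]
  ring

lemma epsOp_odd (φ : ℕ → ℝ) (m : ℕ) :
    epsOp w φ (2 * m + 1) = oddGauge w m * ∑ k ∈ range (m + 1), φ (2 * k) / evenGauge w k := by
  rw [epsOp, if_neg (by lia), show (2 * m + 1) / 2 = m by lia, mul_sum]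
  refine sum_congr rfl fun k hk ↦ ?_
  rw [sqrt_mul_prod_div_prod_eq_gauge_div hw (mem_range_succ_iff.1 hk)]
  ring

lemma Dop_epsOp_even (φ : ℕ → ℝ) (m : ℕ) : Dop w (epsOp w φ) (2 * m) = φ (2 * m) := by
  have epsOp_div_oddGauge (n : ℕ) : epsOp w φ (2 * n + 1) / oddGauge w n =
      ∑ k ∈ range (n + 1), φ (2 * k) / evenGauge w k := by
    rw [epsOp_odd hw, mul_div_cancel_left₀ _ (oddGauge_pos hw n).ne']
  cases m with
  | zero =>
    rw [mul_zero, Dop_zero hw, epsOp_div_oddGauge 0, sum_range_one,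
      mul_div_cancel₀ _ (evenGauge_pos hw 0).ne', mul_zero]
  | succ m =>
    rw [Dop_even_succ hw, epsOp_div_oddGauge, epsOp_div_oddGauge, sum_range_succ,
      add_sub_cancel_left, mul_div_cancel₀ _ (evenGauge_pos hw _).ne']

lemma Dop_epsOp_odd {φ : ℕ → ℝ} (hodd : Summable fun k ↦ oddGauge w k * φ (2 * k + 1)) (m : ℕ) :
    Dop w (epsOp w φ) (2 * m + 1) = φ (2 * m + 1) := by
  have evenGauge_mul_epsOp (n : ℕ) : evenGauge w n * epsOp w φ (2 * n) =
      -∑' k, oddGauge w (n + k) * φ (2 * (n + k) + 1) := by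
    rw [epsOp_even hw, mul_div_cancel₀ _ (evenGauge_pos hw n).ne']
  have tail_succ : ∑' k, oddGauge w (m + k) * φ (2 * (m + k) + 1) = oddGauge w m * φ (2 * m + 1) +
      ∑' k, oddGauge w (m + 1 + k) * φ (2 * (m + 1 + k) + 1) := by
    simpa only [Function.comp_apply, add_zero, add_assoc, add_comm 1] using
      (hodd.comp_injective (add_right_injective m)).tsum_eq_zero_add
  rw [Dop_odd hw, evenGauge_mul_epsOp, evenGauge_mul_epsOp, tail_succ, neg_sub_neg,
    add_sub_cancel_right, mul_div_cancel_left₀ _ (oddGauge_pos hw m).ne']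

lemma epsOp_Dop_even {φ : ℕ → ℝ} (heven : Summable fun k ↦ evenGauge w k * φ (2 * k)) (m : ℕ) :
    epsOp w (Dop w φ) (2 * m) = φ (2 * m) := by
  have oddGauge_mul_Dop (k : ℕ) : oddGauge w k * Dop w φ (2 * k + 1) =
      evenGauge w (k + 1) * φ (2 * (k + 1)) - evenGauge w k * φ (2 * k) := by
    rw [Dop_odd hw, mul_div_cancel₀ _ (oddGauge_pos hw k).ne']
  have telescoped : ∑' k, oddGauge w (m + k) * Dop w φ (2 * (m + k) + 1) =
      -(evenGauge w m * φ (2 * m)) := by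
    simp only [oddGauge_mul_Dop]
    exact tsum_succ_sub_self (heven.comp_injective (add_right_injective m))
  rw [epsOp_even hw, telescoped, neg_neg, mul_div_cancel_left₀ _ (evenGauge_pos hw m).ne']

lemma epsOp_Dop_odd (φ : ℕ → ℝ) (m : ℕ) : epsOp w (Dop w φ) (2 * m + 1) = φ (2 * m + 1) := by
  have Dop_div_evenGauge_zero : Dop w φ (2 * 0) / evenGauge w 0 = φ (2 * 0 + 1) / oddGauge w 0 := by
    rw [mul_zero, Dop_zero hw, mul_div_cancel_left₀ _ (evenGauge_pos hw 0).ne']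
  have Dop_div_evenGauge_succ (k : ℕ) : Dop w φ (2 * (k + 1)) / evenGauge w (k + 1) =
      φ (2 * (k + 1) + 1) / oddGauge w (k + 1) - φ (2 * k + 1) / oddGauge w k := by
    rw [Dop_even_succ hw, mul_div_cancel_left₀ _ (evenGauge_pos hw _).ne']
  have telescoped : ∑ k ∈ range (m + 1), Dop w φ (2 * k) / evenGauge w k =
      φ (2 * m + 1) / oddGauge w m := by
    rw [sum_range_succ', Dop_div_evenGauge_zero]
    simp only [Dop_div_evenGauge_succ]
    rw [sum_range_sub (fun k ↦ φ (2 * k + 1) / oddGauge w k), sub_add_cancel]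
  rw [epsOp_odd hw, telescoped, mul_div_cancel₀ _ (oddGauge_pos hw m).ne']

theorem Dop_epsOp_of_summable {φ : ℕ → ℝ}
    (hodd : Summable fun k ↦ oddGauge w k * φ (2 * k + 1)) : Dop w (epsOp w φ) = φ := by
  funext x
  obtain ⟨m, rfl | rfl⟩ := x.even_or_odd'
  exacts [Dop_epsOp_even hw φ m, Dop_epsOp_odd hw hodd m]

theorem epsOp_Dop_of_summable {φ : ℕ → ℝ}
    (heven : Summable fun k ↦ evenGauge w k * φ (2 * k)) : epsOp w (Dop w φ) = φ := by
  funext x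
  obtain ⟨m, rfl | rfl⟩ := x.even_or_odd'
  exacts [epsOp_Dop_even hw heven m, epsOp_Dop_odd hw φ m]

end PositiveWeight

lemma summable_mul_comp_of_finite_support {ι κ R : Type*} [NonUnitalNonAssocSemiring R]
    [TopologicalSpace R] (c : ι → R) {φ : κ → R} (hφ : φ.support.Finite) {e : ι → κ}
    (he : Function.Injective e) : Summable fun i ↦ c i * φ (e i) :=
  summable_of_hasFiniteSupport <| (hφ.preimage he.injOn).subset fun _ hi ↦ right_ne_zero_of_mul hi

theorem Dop_epsOp_mutual_inverse_general (w : ℕ → ℝ) (hw : ∀ x, 0 < w x) (φ : ℕ → ℝ)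
    (heven : Summable fun k ↦ evenGauge w k * φ (2 * k))
    (hodd : Summable fun k ↦ oddGauge w k * φ (2 * k + 1)) :
    Dop w (epsOp w φ) = φ ∧ epsOp w (Dop w φ) = φ :=
  ⟨Dop_epsOp_of_summable hw hodd, epsOp_Dop_of_summable hw heven⟩

/-- `D` and `ε` are mutually inverse on finitely supported functions. -/
theorem Dop_epsOp_mutual_inverse (w : ℕ → ℝ) (hw : ∀ x, 0 < w x)
    (φ : ℕ → ℝ) (hφ : (Function.support φ).Finite) :
    Dop w (epsOp w φ) = φ ∧ epsOp w (Dop w φ) = φ := by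
  exact Dop_epsOp_mutual_inverse_general w hw φ
    (summable_mul_comp_of_finite_support _ hφ fun _ _ h ↦ by lia)
    (summable_mul_comp_of_finite_support _ hφ fun _ _ h ↦ by lia)
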